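/- For every real number y > 0: L(y²/(1+y+y²)) + L(y/(1+y)²) + L(1/(1+y+y²)) = π²/6, where L is the Rogers dilogarithm. (Each of the three arguments lies in the open interval (0,1).) -/

import Mathlib

/-! Both sides are compared as functions of `y`. On `(0, 1)` the derivative of the Rogers
dilogarithm is `-log (1 - x) / (2 x) - log x / (2 (1 - x))`, and after expanding all logarithms in
`log y`, `log (1 + y)` and `log (1 + y + y²)` the `y`-derivative of the left-hand side vanishes, so
it is constant on `(0, ∞)`. As `y → 0⁺` the three arguments tend to `0`, `0` and `1`. The
boundary values `L(0⁺) = 0` and `L(1⁻) = ζ(2) = π² / 6` come from the series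
`∑ xⁿ / n²` (`rogersL_eq`), which is continuous up to `x = 1`. -/

/-- The Rogers dilogarithm, for `0 < x < 1`:
`L(x) = −∫₀ˣ log(1−t)/t dt + (1/2)·log x · log(1−x)`. -/
noncomputable def rogersL (x : ℝ) : ℝ :=
  (-(∫ t in (0:ℝ)..x, Real.log (1 - t) / t)) + (1 / 2) * Real.log x * Real.log (1 - x)

open Filter Topology

/-- The dilogarithm `∑_{n ≥ 1} xⁿ / n²`, indexed from `0`; the series converges for `|x| ≤ 1`. -/
noncomputable def dilogSeries (x : ℝ) : ℝ := ∑' n : ℕ, x ^ (n + 1) / ((n : ℝ) + 1) ^ 2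

lemma hasSum_inv_succ_sq : HasSum (fun n : ℕ => 1 / ((n : ℝ) + 1) ^ 2) (Real.pi ^ 2 / 6) := by
  have h := (hasSum_nat_add_iff' 1).mpr hasSum_zeta_two
  simpa using h

lemma continuousOn_dilogSeries : ContinuousOn dilogSeries (Set.Icc 0 1) := by
  refine continuousOn_tsum (fun n => by fun_prop) hasSum_inv_succ_sq.summable ?_
  intro n x hx
  rw [Real.norm_of_nonneg (div_nonneg (pow_nonneg hx.1 _) (by positivity))]
  gcongr
  exact pow_le_one₀ hx.1 hx.2

lemma dilogSeries_zero : dilogSeries 0 = 0 := by simp [dilogSeries]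

lemma dilogSeries_one : dilogSeries 1 = Real.pi ^ 2 / 6 := by
  simpa [dilogSeries] using hasSum_inv_succ_sq.tsum_eq

lemma hasDerivAt_dilogSeries {x : ℝ} (h0 : 0 < x) (h1 : x < 1) :
    HasDerivAt dilogSeries (-(Real.log (1 - x) / x)) x := by
  obtain ⟨r, hxr, hr1⟩ := exists_between h1
  have hr0 : 0 < r := h0.trans hxr
  have key : HasDerivAt dilogSeries (∑' n : ℕ, x ^ n / ((n : ℝ) + 1)) x := by
    refine hasDerivAt_tsum_of_isPreconnected (t := Set.Ioo (-r) r) (y₀ := 0)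
      (g := fun (n : ℕ) (z : ℝ) => z ^ (n + 1) / ((n : ℝ) + 1) ^ 2)
      (g' := fun (n : ℕ) (z : ℝ) => z ^ n / ((n : ℝ) + 1))
      (summable_geometric_of_lt_one hr0.le hr1) isOpen_Ioo isPreconnected_Ioo ?_ ?_
      ⟨by linarith, hr0⟩ (by simp) ⟨by linarith, hxr⟩
    · intro n z _
      refine ((hasDerivAt_pow (n + 1) z).div_const (((n : ℝ) + 1) ^ 2)).congr_deriv ?_
      have : (n : ℝ) + 1 ≠ 0 := by positivity
      push_cast
      field_simp
    · intro n z hz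
      rw [norm_div, norm_pow, Real.norm_of_nonneg (by positivity : (0 : ℝ) ≤ (n : ℝ) + 1)]
      have hz' : ‖z‖ ≤ r := (abs_lt.mpr hz).le
      calc ‖z‖ ^ n / ((n : ℝ) + 1) ≤ ‖z‖ ^ n :=
            div_le_self (by positivity) (by linarith [(Nat.cast_nonneg n : (0 : ℝ) ≤ n)])
        _ ≤ r ^ n := by gcongr
  have hs := (Real.hasSum_pow_div_log_of_abs_lt_one
    (show |x| < 1 by rw [abs_of_pos h0]; exact h1)).div_const x
  refine key.congr_deriv ?_
  rw [← neg_div, ← hs.tsum_eq]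
  refine tsum_congr fun n => ?_
  rw [pow_succ]
  field_simp

lemma neg_log_one_sub_div_nonneg {x : ℝ} (h0 : 0 < x) (h1 : x < 1) : 0 ≤ -(Real.log (1 - x) / x) :=
  neg_nonneg.mpr (div_nonpos_of_nonpos_of_nonneg
    (Real.log_nonpos (by linarith) (by linarith)) h0.le)

lemma rogersL_eq {x : ℝ} (h0 : 0 < x) (h1 : x < 1) :
    rogersL x = dilogSeries x + 1 / 2 * Real.log x * Real.log (1 - x) := by
  have hc : ContinuousOn dilogSeries (Set.Icc 0 x) :=
    continuousOn_dilogSeries.mono (Set.Icc_subset_Icc_right h1.le)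
  have hd : ∀ t ∈ Set.Ioo 0 x, HasDerivAt dilogSeries (-(Real.log (1 - t) / t)) t :=
    fun t ht => hasDerivAt_dilogSeries ht.1 (ht.2.trans h1)
  have hint : IntervalIntegrable (fun t => -(Real.log (1 - t) / t)) MeasureTheory.volume 0 x := by
    -- a nonnegative derivative of a function continuous on the closed interval is integrable
    rw [intervalIntegrable_iff_integrableOn_Ioc_of_le h0.le]
    exact intervalIntegral.integrableOn_deriv_of_nonneg hc hd
      fun t ht => neg_log_one_sub_div_nonneg ht.1 (ht.2.trans h1)
  have h := intervalIntegral.integral_eq_sub_of_hasDerivAt_of_le h0.le hc hd hint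
  rw [intervalIntegral.integral_neg, dilogSeries_zero, sub_zero] at h
  rw [rogersL, h]

lemma hasDerivAt_rogersL {x : ℝ} (h0 : 0 < x) (h1 : x < 1) :
    HasDerivAt rogersL (-Real.log (1 - x) / (2 * x) - Real.log x / (2 * (1 - x))) x := by
  have h1' : 1 - x ≠ 0 := by linarith
  have hlog := ((Real.hasDerivAt_log h0.ne').const_mul (1 / 2)).mul
    (((hasDerivAt_id x).const_sub 1).log h1')
  have h := (hasDerivAt_dilogSeries h0 h1).add hlog
  refine (h.congr_of_eventuallyEq (Filter.eventuallyEq_of_mem (Ioo_mem_nhds h0 h1)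
    fun t ht => rogersL_eq ht.1 ht.2)).congr_deriv ?_
  simp only [id]
  field_simp
  ring

lemma tendsto_log_mul_log_one_sub :
    Tendsto (fun x : ℝ => Real.log x * Real.log (1 - x)) (𝓝[>] 0) (𝓝 0) := by
  have hd : HasDerivAt (fun x : ℝ => Real.log (1 - x)) (-1) 0 := by
    simpa using ((hasDerivAt_id (0 : ℝ)).const_sub 1).log (by norm_num)
  have h1 : Tendsto (fun x : ℝ => Real.log (1 - x) / x) (𝓝[>] 0) (𝓝 (-1)) := by
    have := hd.tendsto_slope_zero_right
    refine this.congr fun x => ?_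
    simp [div_eq_inv_mul]
  have h0 := tendsto_log_mul_rpow_nhdsGT_zero zero_lt_one
  simp only [Real.rpow_one] at h0
  have h := h0.mul h1
  rw [zero_mul] at h
  refine h.congr' ?_
  filter_upwards [self_mem_nhdsWithin] with x hx
  have : x ≠ 0 := ne_of_gt hx
  field_simp

lemma tendsto_rogersL_zero : Tendsto rogersL (𝓝[Set.Ioo 0 1] 0) (𝓝 0) := by
  have hl := (tendsto_log_mul_log_one_sub.mono_left
    (nhdsWithin_mono 0 (show Set.Ioo (0 : ℝ) 1 ⊆ Set.Ioi 0 from Set.Ioo_subset_Ioi_self))).const_mul (1 / 2)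
  have hc : Tendsto dilogSeries (𝓝[Set.Ioo 0 1] 0) (𝓝 (dilogSeries 0)) :=
    (continuousOn_dilogSeries 0 (by simp)).mono_left (nhdsWithin_mono _ Set.Ioo_subset_Icc_self)
  have h := hc.add hl
  rw [dilogSeries_zero, mul_zero, add_zero] at h
  refine h.congr' ?_
  filter_upwards [self_mem_nhdsWithin] with x hx
  rw [rogersL_eq hx.1 hx.2, mul_assoc]

lemma tendsto_rogersL_one : Tendsto rogersL (𝓝[Set.Ioo 0 1] 1) (𝓝 (Real.pi ^ 2 / 6)) := by
  -- the logarithmic term is invariant under `x ↦ 1 - x`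
  have hs : Tendsto (fun x : ℝ => 1 - x) (𝓝[Set.Ioo 0 1] 1) (𝓝[>] 0) := by
    refine tendsto_nhdsWithin_iff.mpr ⟨?_, ?_⟩
    · have : Tendsto (fun x : ℝ => 1 - x) (𝓝 1) (𝓝 (1 - 1)) :=
        (continuous_const.sub continuous_id).tendsto 1
      rw [sub_self] at this
      exact this.mono_left nhdsWithin_le_nhds
    · filter_upwards [self_mem_nhdsWithin] with x hx
      exact sub_pos.mpr hx.2
  have hl := (tendsto_log_mul_log_one_sub.comp hs).const_mul (1 / 2)
  have hc : Tendsto dilogSeries (𝓝[Set.Ioo 0 1] 1) (𝓝 (dilogSeries 1)) :=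
    (continuousOn_dilogSeries 1 (by simp)).mono_left (nhdsWithin_mono _ Set.Ioo_subset_Icc_self)
  have h := hc.add hl
  rw [dilogSeries_one, mul_zero, add_zero] at h
  refine h.congr' ?_
  filter_upwards [self_mem_nhdsWithin] with x hx
  rw [rogersL_eq hx.1 hx.2, Function.comp, sub_sub_cancel]
  ring

lemma arg_P_mem {y : ℝ} (hy : 0 < y) : y ^ 2 / (1 + y + y ^ 2) ∈ Set.Ioo (0 : ℝ) 1 :=
  ⟨by positivity, by rw [div_lt_one (by positivity)]; linarith⟩

lemma arg_S_mem {y : ℝ} (hy : 0 < y) : y / (1 + y) ^ 2 ∈ Set.Ioo (0 : ℝ) 1 :=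
  ⟨by positivity, by rw [div_lt_one (by positivity)]; nlinarith⟩

lemma arg_SP_mem {y : ℝ} (hy : 0 < y) : 1 / (1 + y + y ^ 2) ∈ Set.Ioo (0 : ℝ) 1 :=
  ⟨by positivity, by rw [div_lt_one (by positivity)]; nlinarith⟩

/-- The left-hand side of the identity as a function of `y`. -/
noncomputable def rogersSum (y : ℝ) : ℝ :=
  rogersL (y ^ 2 / (1 + y + y ^ 2)) + rogersL (y / (1 + y) ^ 2) + rogersL (1 / (1 + y + y ^ 2))

lemma hasDerivAt_rogersSum {y : ℝ} (hy : 0 < y) : HasDerivAt rogersSum 0 y := by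
  have hD : 1 + y + y ^ 2 ≠ 0 := by positivity
  have hE : 1 + y ≠ 0 := by positivity
  have hE2 : (1 + y) ^ 2 ≠ 0 := by positivity
  have dE : HasDerivAt (fun z : ℝ => 1 + z) 1 y := (hasDerivAt_id y).const_add 1
  have dE2 : HasDerivAt (fun z : ℝ => (1 + z) ^ 2) (2 * (1 + y)) y := by
    simpa using dE.fun_pow 2
  have dy2 : HasDerivAt (fun z : ℝ => z ^ 2) (2 * y) y := by simpa using hasDerivAt_pow 2 y
  have dD : HasDerivAt (fun z : ℝ => 1 + z + z ^ 2) (1 + 2 * y) y := dE.add dy2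
  have a1 := (hasDerivAt_rogersL (arg_P_mem hy).1 (arg_P_mem hy).2).comp y (dy2.div dD hD)
  have a2 := (hasDerivAt_rogersL (arg_S_mem hy).1 (arg_S_mem hy).2).comp y
    ((hasDerivAt_id y).div dE2 hE2)
  have a3 := (hasDerivAt_rogersL (arg_SP_mem hy).1 (arg_SP_mem hy).2).comp y
    ((hasDerivAt_const y (1 : ℝ)).div dD hD)
  have e1 : 1 - y ^ 2 / (1 + y + y ^ 2) = (1 + y) / (1 + y + y ^ 2) := by field_simp; ring
  have e2 : 1 - y / (1 + y) ^ 2 = (1 + y + y ^ 2) / (1 + y) ^ 2 := by field_simp; ring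
  have e3 : 1 - 1 / (1 + y + y ^ 2) = y * (1 + y) / (1 + y + y ^ 2) := by field_simp; ring
  refine ((a1.add a2).add a3).congr_deriv ?_
  rw [e1, e2, e3, Real.log_div hE hD, Real.log_div hD hE2, Real.log_div (by positivity) hD,
    Real.log_div (by positivity) hD, Real.log_div hy.ne' hE2, Real.log_div one_ne_zero hD,
    Real.log_mul hy.ne' hE, Real.log_pow, Real.log_pow, Real.log_one]
  simp only [id]
  generalize Real.log y = A
  generalize Real.log (1 + y) = B
  generalize Real.log (1 + y + y ^ 2) = C
  push_cast
  field_simp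
  ring

lemma tendsto_rogersSum_zero : Tendsto rogersSum (𝓝[>] 0) (𝓝 (Real.pi ^ 2 / 6)) := by
  have lift_tendsto : ∀ (f : ℝ → ℝ) (a : ℝ), ContinuousAt f 0 → f 0 = a →
      (∀ y, 0 < y → f y ∈ Set.Ioo (0 : ℝ) 1) → Tendsto f (𝓝[>] 0) (𝓝[Set.Ioo 0 1] a) := by
    intro f a hf ha hm
    refine tendsto_nhdsWithin_iff.mpr ⟨ha ▸ hf.tendsto.mono_left nhdsWithin_le_nhds, ?_⟩
    filter_upwards [self_mem_nhdsWithin] with y hy using hm y hy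
  have t1 := tendsto_rogersL_zero.comp (lift_tendsto (fun y => y ^ 2 / (1 + y + y ^ 2)) 0
    (ContinuousAt.div (by fun_prop) (by fun_prop) (by norm_num)) (by norm_num)
    fun y hy => arg_P_mem hy)
  have t2 := tendsto_rogersL_zero.comp (lift_tendsto (fun y => y / (1 + y) ^ 2) 0
    (ContinuousAt.div (by fun_prop) (by fun_prop) (by norm_num)) (by norm_num)
    fun y hy => arg_S_mem hy)
  have t3 := tendsto_rogersL_one.comp (lift_tendsto (fun y => 1 / (1 + y + y ^ 2)) 1
    (ContinuousAt.div (by fun_prop) (by fun_prop) (by norm_num)) (by norm_num)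
    fun y hy => arg_SP_mem hy)
  have h := (t1.add t2).add t3
  rw [add_zero, zero_add] at h
  exact h

lemma rogersSum_eq {y : ℝ} (hy : 0 < y) : rogersSum y = Real.pi ^ 2 / 6 := by
  have hconst : ∀ z ∈ Set.Ioi (0 : ℝ), rogersSum y = rogersSum z := fun z hz =>
    isOpen_Ioi.is_const_of_deriv_eq_zero isPreconnected_Ioi
      (fun t ht => (hasDerivAt_rogersSum ht).differentiableAt.differentiableWithinAt)
      (fun t ht => (hasDerivAt_rogersSum ht).deriv) hy hz
  refine tendsto_nhds_unique (tendsto_const_nhds.congr' ?_) tendsto_rogersSum_zero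
  filter_upwards [self_mem_nhdsWithin] with z hz using hconst z hz

/-- The dilogarithm identity `∑_X L(1 − v_X) = n·π²/6` for the algebra
`Λ = ℂ[x]/(x²)` (which has `n = 1` simple module and three indecomposable two-term
complexes of projectives); each of the three arguments lies in `(0,1)`. -/
theorem dual_numbers_dilogarithm_identity (y : ℝ) (hy : 0 < y) :
    y ^ 2 / (1 + y + y ^ 2) ∈ Set.Ioo (0:ℝ) 1 ∧
    y / (1 + y) ^ 2 ∈ Set.Ioo (0:ℝ) 1 ∧
    1 / (1 + y + y ^ 2) ∈ Set.Ioo (0:ℝ) 1 ∧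
    rogersL (y ^ 2 / (1 + y + y ^ 2)) + rogersL (y / (1 + y) ^ 2) +
      rogersL (1 / (1 + y + y ^ 2)) = Real.pi ^ 2 / 6 :=
  ⟨arg_P_mem hy, arg_S_mem hy, arg_SP_mem hy, rogersSum_eq hy⟩
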